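/- For every odd natural number n with n ≥ 3, the function ν_n is a polynomial of degree exactly n: the coefficient c_{2k−1}(n) vanishes whenever 2k−1 > n, the coefficient c_n(n) is nonzero, and hence there exists a polynomial p ∈ ℂ[X] of degree n with ν_n(z) = p(z) for all z ∈ ℂ. -/

import Mathlib

/-- Even coefficients c_{2k}(n) of the generalized power series. -/
noncomputable def ceven (n k : ℕ) : ℂ :=
  if k = 0 then 1
  else if k = 1 then -(n : ℂ)
  else (-1) ^ k * 2 ^ k * (n : ℂ) * ((n : ℂ) - ((2 * (k : ℂ) - 1) ^ 2 + 1)) *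
    (∏ j ∈ Finset.Icc 1 (k - 2), ((n : ℂ) - 2 * (1 + (j : ℂ)))) /
      (Nat.factorial (2 * k) : ℂ)

/-- Odd coefficients: `codd n k` is c_{2k-1}(n), for k ≥ 1. -/
noncomputable def codd (n k : ℕ) : ℂ :=
  if k ≤ 1 then 1
  else (-1) ^ (k + 1) * 2 ^ (k - 1) * ((n : ℂ) - ((2 * ((k : ℂ) - 1)) ^ 2 + 1)) *
    (∏ j ∈ Finset.Icc 1 (k - 2), ((n : ℂ) - (2 * (1 + (j : ℂ)) - 1))) /
      (Nat.factorial (2 * k - 1) : ℂ)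

/-- μₙ(z) = Σ_{k≥0} c_{2k}(n)·z^{2k}. -/
noncomputable def muF (n : ℕ) (z : ℂ) : ℂ := ∑' k : ℕ, ceven n k * z ^ (2 * k)

/-- νₙ(z) = Σ_{k≥1} c_{2k-1}(n)·z^{2k-1}. -/
noncomputable def nuF (n : ℕ) (z : ℂ) : ℂ := ∑' k : ℕ, codd n (k + 1) * z ^ (2 * k + 1)

/-- βₙ = μₙ + νₙ. -/
noncomputable def betaF (n : ℕ) (z : ℂ) : ℂ := muF n z + nuF n z

theorem stmt11 (n : ℕ) (hodd : Odd n) (hn : 3 ≤ n) :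
    (∀ k : ℕ, 1 ≤ k → 2 * k - 1 > n → codd n k = 0) ∧
    codd n ((n + 1) / 2) ≠ 0 ∧
    ∃ p : Polynomial ℂ, p.degree = n ∧ ∀ z : ℂ, nuF n z = p.eval z := by
  obtain ⟨m, rfl⟩ := hodd
  have hm : 1 ≤ m := by omega
  have hz : ∀ k : ℕ, 1 ≤ k → 2 * k - 1 > 2 * m + 1 → codd (2 * m + 1) k = 0 := by
    intro k hk h
    have hp : (∏ j ∈ Finset.Icc 1 (k - 2),
        (((2 * m + 1 : ℕ) : ℂ) - (2 * (1 + (j : ℂ)) - 1))) = 0 := by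
      apply Finset.prod_eq_zero (i := m)
      · rw [Finset.mem_Icc]; omega
      · push_cast; ring
    unfold codd
    rw [if_neg (by omega), hp]
    simp
  have hnz : codd (2 * m + 1) (m + 1) ≠ 0 := by
    unfold codd
    rw [if_neg (by omega)]
    refine div_ne_zero (mul_ne_zero (mul_ne_zero (by simp) ?_) ?_) ?_
    · intro h
      have h2 : ((2 * m : ℕ) : ℂ) = ((4 * m * m : ℕ) : ℂ) := by
        push_cast at h ⊢
        linear_combination h
      have h3 : 2 * m = 4 * m * m := by exact_mod_cast h2
      nlinarith
    · rw [Finset.prod_ne_zero_iff]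
      intro j hj h
      rw [Finset.mem_Icc] at hj
      have h2 : ((2 * m : ℕ) : ℂ) = ((2 * j : ℕ) : ℂ) := by
        push_cast at h ⊢
        linear_combination h
      have h3 : 2 * m = 2 * j := by exact_mod_cast h2
      omega
    · exact_mod_cast Nat.factorial_ne_zero _
  refine ⟨hz, ?_, ?_⟩
  · have : (2 * m + 1 + 1) / 2 = m + 1 := by omega
    rw [this]; exact hnz
  · refine ⟨∑ k ∈ Finset.range (m + 1),
      Polynomial.C (codd (2 * m + 1) (k + 1)) * Polynomial.X ^ (2 * k + 1), ?_, ?_⟩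
    · rw [Finset.sum_range_succ, Polynomial.degree_add_eq_right_of_degree_lt,
        Polynomial.degree_C_mul_X_pow _ hnz]
      rw [Polynomial.degree_C_mul_X_pow _ hnz]
      refine (Polynomial.degree_lt_iff_coeff_zero _ _).2 ?_
      intro i hi
      rw [Polynomial.finset_sum_coeff]
      refine Finset.sum_eq_zero fun k hk => ?_
      rw [Finset.mem_range] at hk
      rw [Polynomial.coeff_C_mul_X_pow, if_neg (by omega)]
    · intro z
      unfold nuF
      rw [tsum_eq_sum (s := Finset.range (m + 1)), Polynomial.eval_finset_sum]
      · simp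
      · intro k hk
        rw [Finset.mem_range] at hk
        rw [hz (k + 1) (by omega) (by omega), zero_mul]
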